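/- arXiv:1908.06959 — 9 statements merged into one kernel-verified Lean document; each statement's English description precedes it below -/
import Mathlib

section
/- (Theorem 1.3(1) / Theorem 4.1(1), reformulated via matchings and minors.) Let (K, v) be a matrix-configuration with K supported on an edge set E. Let J be a subset of Fin N with |J| = k, and suppose there is no injective map f : Fin M → Fin N such that (b, f b) ∈ E for every b and the range of f is disjoint from J (i.e., the underlying bipartite graph has no almost perfect matching avoiding the white vertices in J). Then the k × k matrix whose columns are the vectors v j for j ∈ J has determinant zero. (This says that all Plücker coordinates of the point of the Grassmannian spanned by the columns of v that lie outside the positroid of the graph vanish, i.e., the boundary point lies in the positroid variety.) -/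
/-- **Theorem 1.3(1) / 4.1(1).** If `(K, v)` is a matrix-configuration supported on an
edge set `E`, and `J` is a `k`-element set of white vertices such that the bipartite
graph has no almost perfect matching avoiding `J`, then the determinant of the matrix
with columns `v j`, `j ∈ J`, vanishes. -/
theorem boundary_in_positroid_variety
    (k M : ℕ) (K : Matrix (Fin M) (Fin (M + k)) ℂ) (v : Fin (M + k) → Fin k → ℂ)
    (hrank : K.rank = M)
    (hrel : ∀ b : Fin M, ∑ w, K b w • v w = 0)
    (hspan : Submodule.span ℂ (Set.range v) = ⊤)
    (E : Set (Fin M × Fin (M + k)))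
    (hsupp : ∀ b w, (b, w) ∉ E → K b w = 0)
    (J : Finset (Fin (M + k))) (hJ : J.card = k)
    (hnomatch : ¬ ∃ f : Fin M → Fin (M + k),
      Function.Injective f ∧ (∀ b, (b, f b) ∈ E) ∧ ∀ b, f b ∉ J) :
    Matrix.det (Matrix.of fun (i j : Fin k) => v (J.orderEmbOfFin hJ j) i) = 0 := by
  classical
  have hC : (Jᶜ).card = M := by
    rw [Finset.card_compl, hJ, Fintype.card_fin]; omega
  have hdet : (K.submatrix id (Jᶜ.orderEmbOfFin hC)).det = 0 := by
    rw [Matrix.det_apply]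
    refine Finset.sum_eq_zero fun σ _ => ?_
    by_cases h : ∃ i, K (σ i) (Jᶜ.orderEmbOfFin hC i) = 0
    · obtain ⟨i, hi⟩ := h
      rw [Finset.prod_eq_zero (Finset.mem_univ i) (by simpa using hi), smul_zero]
    · push Not at h
      refine absurd ⟨fun b => Jᶜ.orderEmbOfFin hC (σ.symm b), ?_, ?_, ?_⟩ hnomatch
      · exact (Jᶜ.orderEmbOfFin hC).injective.comp σ.symm.injective
      · intro b
        by_contra hb
        apply h (σ.symm b)
        rw [Equiv.apply_symm_apply]
        exact hsupp _ _ hb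
      · intro b
        exact Finset.mem_compl.mp (Finset.orderEmbOfFin_mem Jᶜ hC _)
  obtain ⟨u, hu, huK⟩ := Matrix.exists_vecMul_eq_zero_iff.mpr hdet
  have hli : LinearIndependent ℂ K.row := by
    rw [linearIndependent_iff_card_eq_finrank_span, Set.finrank, ← Matrix.rank_eq_finrank_span_row,
      hrank, Fintype.card_fin]
  have hinj := Matrix.vecMul_injective_iff.mpr hli
  set r := Matrix.vecMul u K with hr
  have hr0 : r ≠ 0 := fun h => hu (hinj (by simpa [hr] using h))
  have hrJ : ∀ w, w ∉ J → r w = 0 := by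
    intro w hw
    have : w ∈ Set.range (Jᶜ.orderEmbOfFin hC) := by
      rw [Finset.range_orderEmbOfFin]; simpa using hw
    obtain ⟨i, rfl⟩ := this
    exact congrFun huK i
  have hrv : ∀ i, ∑ w, v w i * r w = 0 := by
    intro i
    have h1 : ∀ b, ∑ w, K b w * v w i = 0 := by
      intro b
      simpa [Finset.sum_apply] using congrFun (hrel b) i
    calc ∑ w, v w i * r w = ∑ w, ∑ b, u b * (K b w * v w i) := by
          refine Finset.sum_congr rfl fun w _ => ?_
          simp only [hr, Matrix.vecMul, dotProduct, Finset.mul_sum]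
          exact Finset.sum_congr rfl fun b _ => by ring
      _ = 0 := by
          rw [Finset.sum_comm]
          simp [← Finset.mul_sum, h1]
  refine Matrix.exists_mulVec_eq_zero_iff.mp ⟨fun j => r (J.orderEmbOfFin hJ j), ?_, ?_⟩
  · intro h
    apply hr0
    funext w
    by_cases hw : w ∈ J
    · have : w ∈ Set.range (J.orderEmbOfFin hJ) := by
        rw [Finset.range_orderEmbOfFin]; simpa using hw
      obtain ⟨i, rfl⟩ := this
      exact congrFun h i
    · exact hrJ w hw
  · funext i
    simp only [Matrix.mulVec, dotProduct, Matrix.of_apply, Pi.zero_apply]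
    rw [← hrv i]
    refine Fintype.sum_of_injective _ (J.orderEmbOfFin hJ).injective _ _ ?_ (fun _ => rfl)
    intro w hw
    rw [Finset.range_orderEmbOfFin] at hw
    rw [hrJ w (by simpa using hw), mul_zero]
end

section
/- (A configuration is determined by its Kasteleyn matrix; consequence of Lemma 4.3 used to establish injectivity of the charts φ_F.) Let K be a matrix over ℂ with rows indexed by Fin M and columns indexed by Fin N = Fin (M + k), of rank M. Suppose v : Fin N → ℂ^k and v' : Fin N → ℂ^k are two families of vectors such that each family spans ℂ^k and each satisfies all the row relations of K, i.e., ∑_w (K b w) • v w = 0 and ∑_w (K b w) • v' w = 0 for every row b. Then there exists a ℂ-linear automorphism f of ℂ^k with v' w = f (v w) for every w. -/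
theorem kasteleyn_ker_aux
    (k M : ℕ) (K : Matrix (Fin M) (Fin (M + k)) ℂ)
    (hrank : K.rank = M)
    (v : Fin (M + k) → Fin k → ℂ)
    (hspan : Submodule.span ℂ (Set.range v) = ⊤)
    (hrel : ∀ b : Fin M, ∑ w, K b w • v w = 0) :
    Submodule.span ℂ (Set.range K.row) = LinearMap.ker (Fintype.linearCombination ℂ v) := by
  apply Submodule.eq_of_le_of_finrank_eq
  · rw [Submodule.span_le]
    rintro _ ⟨b, rfl⟩
    simpa [Fintype.linearCombination_apply, Matrix.row] using hrel b
  · rw [← Matrix.rank_eq_finrank_span_row, hrank]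
    have h := LinearMap.finrank_range_add_finrank_ker (Fintype.linearCombination ℂ v)
    rw [Fintype.range_linearCombination, hspan, finrank_top] at h
    simp only [Module.finrank_fin_fun] at h
    omega

/-- A vector-relation configuration on a plabic graph is determined by its Kasteleyn
matrix: two families of spanning vectors satisfying the row relations of the same
full-rank matrix `K` differ by a linear automorphism of `ℂ^k`. -/
theorem configuration_determined_by_kasteleyn_matrix
    (k M : ℕ) (K : Matrix (Fin M) (Fin (M + k)) ℂ)
    (hrank : K.rank = M)
    (v v' : Fin (M + k) → Fin k → ℂ)
    (hspan : Submodule.span ℂ (Set.range v) = ⊤)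
    (hspan' : Submodule.span ℂ (Set.range v') = ⊤)
    (hrel : ∀ b : Fin M, ∑ w, K b w • v w = 0)
    (hrel' : ∀ b : Fin M, ∑ w, K b w • v' w = 0) :
    ∃ f : (Fin k → ℂ) ≃ₗ[ℂ] (Fin k → ℂ), ∀ w, v' w = f (v w) := by
  have hk := (kasteleyn_ker_aux k M K hrank v hspan hrel).symm.trans
    (kasteleyn_ker_aux k M K hrank v' hspan' hrel')
  have hs : Function.Surjective (Fintype.linearCombination ℂ v) := by
    rw [← LinearMap.range_eq_top, Fintype.range_linearCombination, hspan]
  have hs' : Function.Surjective (Fintype.linearCombination ℂ v') := by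
    rw [← LinearMap.range_eq_top, Fintype.range_linearCombination, hspan']
  refine ⟨((LinearMap.quotKerEquivOfSurjective _ hs).symm.trans
    (Submodule.quotEquivOfEq _ _ hk)).trans (LinearMap.quotKerEquivOfSurjective _ hs'), ?_⟩
  intro w
  have h1 : v w = LinearMap.quotKerEquivOfSurjective _ hs
      (Submodule.Quotient.mk (Pi.single w 1)) := by
    simp [LinearMap.quotKerEquivOfSurjective_apply_mk]
  rw [h1]
  simp only [LinearEquiv.trans_apply, LinearEquiv.symm_apply_apply,
    Submodule.quotEquivOfEq_mk]
  simp [LinearMap.quotKerEquivOfSurjective_apply_mk]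
end

section
/- (Lemma 4.4.) Let (K, v) be a matrix-configuration. Then there exists a nonzero scalar λ ∈ ℂ, independent of the choice below, with the following property: for every strictly monotone map s : Fin k → Fin N, letting t : Fin M → Fin N be the strictly monotone enumeration of the complement of the range of s, one has det [v (s 0), v (s 1), …, v (s (k−1))] = (−1)^(∑_j ((s j : ℕ) − (j : ℕ))) · λ · det (K.submatrix id t), where the left-hand side is the determinant of the k × k matrix whose j-th column is v (s j), and the right-hand side minor of K uses all rows and the columns in the complement of the range of s. -/
theorem aux_card (k M : ℕ) (e : Fin k ⊕ Fin M ≃ Fin (k + M))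
    (hs : StrictMono fun j => e (Sum.inl j)) (j : Fin k) :
    (Finset.univ.filter fun a : Fin M => ¬ e (Sum.inl j) < e (Sum.inr a)).card
      = (e (Sum.inl j) : ℕ) - (j : ℕ) := by
  have h1 : ((Finset.univ.filter fun x : Fin (k + M) => x < e (Sum.inl j))).card
      = (e (Sum.inl j) : ℕ) := by
    have : (Finset.univ.filter fun x : Fin (k + M) => x < e (Sum.inl j))
      = Finset.Iio (e (Sum.inl j)) := by ext; simp
    rw [this, Fin.card_Iio]
  have h2 : ((Finset.univ.filter fun x : Fin (k + M) => x < e (Sum.inl j))).card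
      = (j : ℕ) + (Finset.univ.filter fun a : Fin M => ¬ e (Sum.inl j) < e (Sum.inr a)).card := by
    rw [Finset.card_filter, ← Equiv.sum_comp e, Fintype.sum_sum_type, ← Finset.card_filter,
      ← Finset.card_filter]
    congr 1
    · have : (Finset.univ.filter fun x : Fin k => e (Sum.inl x) < e (Sum.inl j))
        = Finset.Iio j := by
        ext x; simpa using hs.lt_iff_lt
      rw [this, Fin.card_Iio]
    · congr 1
      ext a
      simp only [Finset.mem_filter, Finset.mem_univ, true_and, not_lt]
      constructor
      · exact le_of_lt
      · intro h
        exact lt_of_le_of_ne h (by simp)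
  omega

theorem aux_sign (k M : ℕ) (e : Fin k ⊕ Fin M ≃ Fin (k + M))
    (hs : StrictMono fun j => e (Sum.inl j)) (ht : StrictMono fun a => e (Sum.inr a)) :
    Equiv.Perm.sign (finSumFinEquiv.symm.trans e)
      = (-1) ^ (∑ j : Fin k, ((e (Sum.inl j) : ℕ) - (j : ℕ))) := by
  have key : ∀ σ : Equiv.Perm (Fin (k + M)), Equiv.Perm.sign σ =
      ∏ j, ∏ i, if i < j then (if σ i < σ j then (1 : ℤˣ) else -1) else 1 := by
    intro σ
    rw [Equiv.Perm.sign_eq_prod_prod_Iio]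
    refine Finset.prod_congr rfl fun j _ => ?_
    rw [← Finset.prod_filter]
    refine Finset.prod_congr ?_ fun _ _ => rfl
    ext; simp
  rw [key, Fin.prod_univ_add]
  simp only [Fin.prod_univ_add, Equiv.trans_apply, finSumFinEquiv_symm_apply_castAdd,
    finSumFinEquiv_symm_apply_natAdd]
  have e1 : ∀ i j : Fin k, (if Fin.castAdd M i < Fin.castAdd M j then
      (if e (Sum.inl i) < e (Sum.inl j) then (1 : ℤˣ) else -1) else 1) = 1 := by
    intro i j
    split_ifs with h1 h2
    · rfl
    · exact absurd (hs (show i < j from h1)) h2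
    · rfl
  have e2 : ∀ i j : Fin M, (if Fin.natAdd k i < Fin.natAdd k j then
      (if e (Sum.inr i) < e (Sum.inr j) then (1 : ℤˣ) else -1) else 1) = 1 := by
    intro i j
    split_ifs with h1 h2
    · rfl
    · exact absurd (ht (show i < j by simpa using h1)) h2
    · rfl
  have e3 : ∀ (i : Fin M) (j : Fin k), ¬ (Fin.natAdd k i < Fin.castAdd M j) := by
    intro i j; simp [Fin.lt_def]; omega
  have e4 : ∀ (i : Fin M) (j : Fin k), (Fin.castAdd M j < Fin.natAdd k i) := by
    intro i j; simp [Fin.lt_def]; omega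
  simp only [e1, e2, e3, e4, if_true, if_false, Finset.prod_const_one, one_mul, mul_one]
  rw [Finset.prod_comm, ← Finset.prod_pow_eq_pow_sum]
  refine Finset.prod_congr rfl fun j _ => ?_
  rw [← aux_card k M e hs j, Finset.prod_ite]
  simp

theorem aux_main (k M n : ℕ) (hn : n = k + M) (K : Matrix (Fin M) (Fin n) ℂ)
    (v : Fin n → Fin k → ℂ)
    (hrank : K.rank = M)
    (hrel : ∀ b : Fin M, ∑ w, K b w • v w = 0)
    (hspan : Submodule.span ℂ (Set.range v) = ⊤) :
    ∃ lam : ℂ, lam ≠ 0 ∧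
      ∀ (s : Fin k → Fin n) (t : Fin M → Fin n),
        StrictMono s → StrictMono t → Set.range t = (Set.range s)ᶜ →
        Matrix.det (Matrix.of fun (i j : Fin k) => v (s j) i) =
          (-1 : ℂ) ^ (∑ j : Fin k, ((s j : ℕ) - (j : ℕ))) * lam *
            Matrix.det (K.submatrix id t) := by
  subst hn
  let V : Matrix (Fin (k + M)) (Fin k) ℂ := Matrix.of v
  have hKV : K * V = 0 := by
    ext b i
    have := congrFun (hrel b) i
    simpa [Matrix.mul_apply, V, Finset.sum_apply] using this
  obtain ⟨R, hR⟩ : ∃ R : Matrix (Fin (k + M)) (Fin M) ℂ, K * R = 1 := by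
    rw [← Matrix.mulVec_surjective_iff_exists_right_inverse]
    have : LinearMap.range K.mulVecLin = ⊤ := by
      apply Submodule.eq_top_of_finrank_eq
      rw [← Matrix.rank, hrank]; simp
    exact LinearMap.range_eq_top.1 this
  obtain ⟨L, hL⟩ : ∃ L : Matrix (Fin k) (Fin (k + M)) ℂ, L * V = 1 := by
    rw [← Matrix.vecMul_surjective_iff_exists_left_inverse]
    have : LinearMap.range V.vecMulLinear = ⊤ := by
      rw [range_vecMulLinear]; exact hspan
    exact LinearMap.range_eq_top.1 this
  -- stack L above K
  let P : Matrix (Fin k ⊕ Fin M) (Fin (k + M)) ℂ := Matrix.fromRows L K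
  let P0 := P.submatrix id finSumFinEquiv
  have hP0 : P0.det ≠ 0 := by
    have h : P * Matrix.fromCols V R = Matrix.fromBlocks 1 (L * R) 0 1 := by
      rw [Matrix.fromRows_mul_fromCols, hL, hKV, hR]
    have h' : P0 * (Matrix.fromCols V R).submatrix finSumFinEquiv id
        = Matrix.fromBlocks 1 (L * R) 0 1 := by
      rw [← h, Matrix.submatrix_mul_equiv, Matrix.submatrix_id_id]
    have h2 := congrArg Matrix.det h'
    rw [Matrix.det_mul, Matrix.det_fromBlocks_zero₂₁, Matrix.det_one, Matrix.det_one] at h2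
    intro h0
    simp [h0] at h2
  refine ⟨P0.det⁻¹, inv_ne_zero hP0, ?_⟩
  intro s t hs ht hst
  have hbij : Function.Bijective (Sum.elim s t) := by
    constructor
    · refine Function.Injective.sumElim hs.injective ht.injective ?_
      intro a b hab
      have : t b ∈ (Set.range s)ᶜ := hst ▸ Set.mem_range_self b
      exact this ⟨a, hab⟩
    · intro x
      by_cases hx : x ∈ Set.range s
      · obtain ⟨j, rfl⟩ := hx; exact ⟨Sum.inl j, rfl⟩
      · have : x ∈ Set.range t := by rw [hst]; exact hx
        obtain ⟨j, rfl⟩ := this; exact ⟨Sum.inr j, rfl⟩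
  let e := Equiv.ofBijective _ hbij
  have hel : ∀ j, e (Sum.inl j) = s j := fun _ => rfl
  have her : ∀ j, e (Sum.inr j) = t j := fun _ => rfl
  have hsign := aux_sign k M e hs ht
  simp only [hel] at hsign
  have hdet : (P.submatrix id e).det =
      (-1 : ℂ) ^ (∑ j : Fin k, ((s j : ℕ) - (j : ℕ))) * P0.det := by
    have h1 := Matrix.det_permute' (finSumFinEquiv.symm.trans e)
      (P.submatrix finSumFinEquiv.symm id)
    rw [hsign] at h1
    have h2 : (P.submatrix id e).det = ((P.submatrix finSumFinEquiv.symm id).submatrix id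
        (finSumFinEquiv.symm.trans e)).det := by
      rw [← Matrix.det_submatrix_equiv_self finSumFinEquiv.symm (P.submatrix id e)]
      rfl
    have h3 : P0.det = (P.submatrix finSumFinEquiv.symm id).det := by
      rw [← Matrix.det_submatrix_equiv_self finSumFinEquiv.symm P0]
      congr 1
      ext i j
      simp [P0]
    rw [h2, h1, h3]
    push_cast
    rfl
  have hprod : P.submatrix id e * Matrix.fromBlocks (V.submatrix s id) 0 (V.submatrix t id) 1
      = Matrix.fromBlocks 1 (L.submatrix id t) 0 (K.submatrix id t) := by
    have h1 : Matrix.fromBlocks (V.submatrix s id) 0 (V.submatrix t id) 1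
      = (Matrix.fromCols V (Matrix.of fun w (a : Fin M) => if w = t a then (1 : ℂ) else 0)).submatrix
          e id := by
      ext (i | i) (j | j)
      · rfl
      · have : s i ≠ t j := fun h => by
          have := hbij.1 (a₁ := Sum.inl i) (a₂ := Sum.inr j) h
          simp at this
        simp [hel, this]
      · rfl
      · simp [her, Matrix.one_apply, ht.injective.eq_iff]
    rw [h1, Matrix.submatrix_mul_equiv, Matrix.fromRows_mul_fromCols, hL, hKV,
      Matrix.submatrix_id_id]
    congr 1
    · ext i j; simp [Matrix.mul_apply]
    · ext i j; simp [Matrix.mul_apply]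
  have hfin := congrArg Matrix.det hprod
  rw [Matrix.det_mul, Matrix.det_fromBlocks_zero₂₁, Matrix.det_fromBlocks_zero₁₂, Matrix.det_one,
    Matrix.det_one, hdet, mul_one, one_mul] at hfin
  have hT : Matrix.det (Matrix.of fun (i j : Fin k) => v (s j) i) = (V.submatrix s id).det := by
    rw [← Matrix.det_transpose]; rfl
  rw [hT, ← hfin]
  have hsq : ((-1 : ℂ) ^ (∑ j : Fin k, ((s j : ℕ) - (j : ℕ)))) *
      ((-1 : ℂ) ^ (∑ j : Fin k, ((s j : ℕ) - (j : ℕ)))) = 1 := by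
    rw [← mul_pow]; simp
  generalize (-1 : ℂ) ^ (∑ j : Fin k, ((s j : ℕ) - (j : ℕ))) = c at *
  calc _ = (c * c) * (P0.det⁻¹ * P0.det) * (V.submatrix s id).det := by
        rw [hsq, inv_mul_cancel₀ hP0]; ring
    _ = _ := by ring


/-- **Lemma 4.4.** For a matrix-configuration `(K, v)` there is a nonzero scalar `λ`,
independent of the choice of columns, such that for every strictly monotone
`s : Fin k → Fin N` with complementary strictly monotone enumeration `t : Fin M → Fin N`,
`det [v (s 0) ⋯ v (s (k-1))] = (-1) ^ (∑ j, (s j - j)) * λ * Δ_{W ∖ range s}(K)`. -/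
theorem det_eq_sign_mul_lambda_mul_minor
    (k M : ℕ) (K : Matrix (Fin M) (Fin (M + k)) ℂ) (v : Fin (M + k) → Fin k → ℂ)
    (hrank : K.rank = M)
    (hrel : ∀ b : Fin M, ∑ w, K b w • v w = 0)
    (hspan : Submodule.span ℂ (Set.range v) = ⊤) :
    ∃ lam : ℂ, lam ≠ 0 ∧
      ∀ (s : Fin k → Fin (M + k)) (t : Fin M → Fin (M + k)),
        StrictMono s → StrictMono t → Set.range t = (Set.range s)ᶜ →
        Matrix.det (Matrix.of fun (i j : Fin k) => v (s j) i) =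
          (-1 : ℂ) ^ (∑ j : Fin k, ((s j : ℕ) - (j : ℕ))) * lam *
            Matrix.det (K.submatrix id t) := by
  exact aux_main k M (M + k) (Nat.add_comm M k) K v hrank hrel hspan
end

section
/- (Proposition 4.9.) Let (K, v) be a matrix-configuration with K supported on an edge set E. Let S be any subset of Fin N, and suppose there is no injective map f : Fin M → Fin N such that (b, f b) ∈ E for every b and the range of f is disjoint from S (i.e., there is no matching of the black vertices with a set of white vertices disjoint from S). Then the family of vectors v w for w ∈ S is linearly dependent over ℂ. -/
/-- **Proposition 4.9.** Let `(K, v)` be a matrix-configuration supported on an edge set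
`E`, and let `S` be a set of white vertices. If there is no matching of the black
vertices with a set of white vertices disjoint from `S`, then the vectors `v w`, `w ∈ S`,
are linearly dependent. -/
theorem dependent_of_no_matching_avoiding
    (k M : ℕ) (K : Matrix (Fin M) (Fin (M + k)) ℂ) (v : Fin (M + k) → Fin k → ℂ)
    (hrank : K.rank = M)
    (hrel : ∀ b : Fin M, ∑ w, K b w • v w = 0)
    (hspan : Submodule.span ℂ (Set.range v) = ⊤)
    (E : Set (Fin M × Fin (M + k)))
    (hsupp : ∀ b w, (b, w) ∉ E → K b w = 0)
    (S : Set (Fin (M + k)))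
    (hnomatch : ¬ ∃ f : Fin M → Fin (M + k),
      Function.Injective f ∧ (∀ b, (b, f b) ∈ E) ∧ ∀ b, f b ∉ S) :
    ¬ LinearIndependent ℂ (fun w : S => v w) := by
  classical
  intro hind
  apply hnomatch
  have hrows : LinearIndependent ℂ K.row := by
    rw [linearIndependent_iff_card_eq_finrank_span, Set.finrank, ← Matrix.rank_eq_finrank_span_row,
      hrank, Fintype.card_fin]
  let t : Fin M → Finset (Fin (M + k)) :=
    fun b => Finset.univ.filter (fun w => (b, w) ∈ E ∧ w ∉ S)
  have hall : ∀ A : Finset (Fin M), A.card ≤ (A.biUnion t).card := by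
    intro A
    have hli : LinearIndependent ℂ
        (fun (b : A) (w : (A.biUnion t : Finset (Fin (M + k)))) => K b w) := by
      rw [Fintype.linearIndependent_iff]
      intro g hg
      let u : Fin (M + k) → ℂ := fun w => ∑ b : A, g b * K b w
      have hu1 : ∀ w, w ∉ S → u w = 0 := by
        intro w hw
        by_cases hB : w ∈ A.biUnion t
        · have := congrFun hg ⟨w, hB⟩
          simpa [u, Finset.sum_apply] using this
        · apply Finset.sum_eq_zero
          intro b _
          rw [hsupp b w, mul_zero]
          intro hE
          exact hB (Finset.mem_biUnion.2 ⟨b, b.2, by simp [t, hE, hw]⟩)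
      have hsum : ∑ w, u w • v w = 0 := by
        simp only [u, Finset.sum_smul, mul_smul]
        rw [Finset.sum_comm]
        apply Finset.sum_eq_zero
        intro b _
        rw [← Finset.smul_sum, hrel, smul_zero]
      have hsumS : ∑ w : S, u w • v w = 0 := by
        rw [← hsum]
        refine Fintype.sum_of_injective (fun w : S => (w : Fin (M + k))) Subtype.val_injective
          _ _ ?_ (fun _ => rfl)
        intro w hw
        rw [hu1 w (by simpa using hw), zero_smul]
      have huS := Fintype.linearIndependent_iff.1 hind (fun w => u w) hsumS
      have hu : ∀ w, u w = 0 := fun w =>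
        if h : w ∈ S then huS ⟨w, h⟩ else hu1 w h
      have hA := hrows.comp (fun b : A => (b : Fin M)) Subtype.val_injective
      refine Fintype.linearIndependent_iff.1 hA g ?_
      funext w
      simpa [u, Finset.sum_apply] using hu w
    have := hli.fintype_card_le_finrank
    rwa [Module.finrank_fintype_fun_eq_card, Fintype.card_coe, Fintype.card_coe] at this
  obtain ⟨f, hf, hft⟩ := (Finset.all_card_le_biUnion_card_iff_exists_injective t).1 hall
  have hft' : ∀ b, (b, f b) ∈ E ∧ f b ∉ S := fun b => by simpa [t] using hft b
  exact ⟨f, hf, fun b => (hft' b).1, fun b => (hft' b).2⟩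
end

section
/- (Core of Proposition 2.5, describing the new point produced by urban renewal.) Let V be a vector space over ℂ, let d ≥ 3, and let u : Fin d → V be a circuit, i.e., the family u is linearly dependent but every proper subfamily is linearly independent. Let c : Fin d → ℂ be a relation with ∑_i (c i) • u i = 0 and c i ≠ 0 for all i. Then the intersection of submodules span_ℂ {u 0, u 1} ⊓ span_ℂ {u 2, u 3, …, u (d−1)} equals the one-dimensional submodule span_ℂ {(c 0) • u 0 + (c 1) • u 1}. -/
/-- **Core of Proposition 2.5 (urban renewal).** If `u : Fin d → V` is a circuit
(`d ≥ 3`) with relation `c` having all coefficients nonzero, then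
`span {u 0, u 1} ⊓ span {u 2, …, u (d-1)} = span {c 0 • u 0 + c 1 • u 1}`. -/
theorem urban_renewal_intersection_point
    {V : Type*} [AddCommGroup V] [Module ℂ V]
    (d : ℕ) (hd : 3 ≤ d) (u : Fin d → V)
    (hdep : ¬ LinearIndependent ℂ u)
    (hind : ∀ i : Fin d, LinearIndependent ℂ (fun j : {j : Fin d // j ≠ i} => u j))
    (c : Fin d → ℂ)
    (hc : ∑ i, c i • u i = 0)
    (hcne : ∀ i, c i ≠ 0) :
    Submodule.span ℂ ({u ⟨0, by omega⟩, u ⟨1, by omega⟩} : Set V) ⊓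
        Submodule.span ℂ {x : V | ∃ i : Fin d, 2 ≤ (i : ℕ) ∧ x = u i} =
      Submodule.span ℂ
        ({c ⟨0, by omega⟩ • u ⟨0, by omega⟩ + c ⟨1, by omega⟩ • u ⟨1, by omega⟩} : Set V) := by
  obtain ⟨n, rfl⟩ : ∃ n, d = n + 2 := ⟨d - 2, by omega⟩
  have h0 : (⟨0, by omega⟩ : Fin (n + 2)) = 0 := rfl
  have h1 : (⟨1, by omega⟩ : Fin (n + 2)) = (0 : Fin (n + 1)).succ := rfl
  rw [h0, h1]
  have hset : {x : V | ∃ i : Fin (n + 2), 2 ≤ (i : ℕ) ∧ x = u i} =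
      Set.range (fun j : Fin n => u j.succ.succ) := by
    ext x
    constructor
    · rintro ⟨i, hi, rfl⟩
      refine ⟨⟨(i : ℕ) - 2, by omega⟩, ?_⟩
      show u _ = u _
      congr 1
      apply Fin.ext
      simp only [Fin.val_succ]
      omega
    · rintro ⟨j, rfl⟩
      exact ⟨j.succ.succ, by simp, rfl⟩
  rw [hset]
  have hli : LinearIndependent ℂ (fun j : Fin (n + 1) => u j.succ) :=
    (hind 0).comp (fun j : Fin (n + 1) => (⟨j.succ, Fin.succ_ne_zero j⟩ : {j : Fin (n + 2) // j ≠ 0}))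
      (fun a b hab => Fin.succ_injective _ (congrArg Subtype.val hab))
  rw [Fin.sum_univ_succ, Fin.sum_univ_succ] at hc
  have hc0 := hcne 0
  apply le_antisymm
  · rintro x ⟨hx1, hx2⟩
    obtain ⟨a, b, hab⟩ := Submodule.mem_span_pair.1 hx1
    obtain ⟨f, hf⟩ := (Submodule.mem_span_range_iff_exists_fun ℂ).1 hx2
    have key := Fintype.linearIndependent_iff.1 hli
      (Fin.cons (c 0 * b - a * c (0 : Fin (n + 1)).succ)
        (fun j : Fin n => -(c 0 * f j) - a * c j.succ.succ)) (by
        rw [Fin.sum_univ_succ]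
        simp only [Fin.cons_zero, Fin.cons_succ, sub_smul, neg_smul, mul_smul,
          Finset.sum_sub_distrib, Finset.sum_neg_distrib, ← Finset.smul_sum]
        rw [hf, ← hab]
        have hs := eq_neg_of_add_eq_zero_right ((add_assoc _ _ _).trans hc)
        rw [hs]
        module) 0
    rw [Fin.cons_zero] at key
    rw [Submodule.mem_span_singleton]
    refine ⟨a / c 0, ?_⟩
    have hb : b = a / c 0 * c (0 : Fin (n + 1)).succ := by
      field_simp
      linear_combination key
    have ha : a = a / c 0 * c 0 := by field_simp
    rw [← hab, smul_add, smul_smul, smul_smul, ← hb, ← ha]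
  · rw [Submodule.span_singleton_le_iff_mem]
    refine ⟨Submodule.mem_span_pair.2 ⟨_, _, rfl⟩, ?_⟩
    have hs := eq_neg_of_add_eq_zero_left ((add_assoc _ _ _).trans hc)
    rw [hs]
    exact Submodule.neg_mem _ (Submodule.sum_mem _ fun j _ =>
      Submodule.smul_mem _ _ (Submodule.subset_span ⟨j, rfl⟩))
end

section
/- (Abstract form of Proposition 5.3.) Let k ≥ 1 and let d satisfy 2 ≤ d ≤ k + 1. Let φ : Fin (k+1) → (ℂ^k →ₗ[ℂ] ℂ) be a family of k + 1 linear functionals on ℂ^k such that for every index a the subfamily (φ x) for x ≠ a is linearly independent (equivalently, any k of the k + 1 functionals are linearly independent). Let σ : Fin d → Fin (k+1) be injective, and for each i : Fin d (with i − 1 denoting the cyclic predecessor of i in Fin d) define the submodule L i = ⋂ over all a : Fin (k+1) with a ≠ σ(i−1) and a ≠ σ(i) of ker (φ a). Then: (a) each L i is one-dimensional; and (b) for any choice of nonzero vectors v i ∈ L i (i : Fin d), there exists c : Fin d → ℂ with all c i ≠ 0 and ∑_i (c i) • v i = 0, and every c' : Fin d → ℂ with ∑_i (c' i) • v i = 0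 is a scalar multiple of c; in other words, the family (v i) is a circuit. -/
/-- Rescaled functionals summing to zero: joint injectivity and surjectivity onto the
zero-sum hyperplane. -/
theorem exists_rescaling (k : ℕ)
    (φ : Fin (k + 1) → ((Fin k → ℂ) →ₗ[ℂ] ℂ))
    (hφ : ∀ a : Fin (k + 1),
      LinearIndependent ℂ (fun x : {x : Fin (k + 1) // x ≠ a} => φ x)) :
    ∃ ψ : Fin (k + 1) → ((Fin k → ℂ) →ₗ[ℂ] ℂ),
      (∀ a x, ψ a x = 0 ↔ φ a x = 0) ∧ (∀ x, ∑ a, ψ a x = 0) ∧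
      (∀ x, (∀ a, ψ a x = 0) → x = 0) ∧
      (∀ y : Fin (k + 1) → ℂ, ∑ a, y a = 0 → ∃ x, ∀ a, ψ a x = y a) := by
  have hdep : ¬ LinearIndependent ℂ φ := by
    intro h
    have := h.fintype_card_le_finrank
    simp [Subspace.dual_finrank_eq] at this
  obtain ⟨r, hr, b, hb⟩ := Fintype.not_linearIndependent_iff.1 hdep
  have hr0 : ∀ a, r a ≠ 0 := by
    intro a ha
    have h1 := Fintype.linearIndependent_iff.1 (hφ a) (fun x => r x) (by
      rw [Fintype.sum_eq_add_sum_subtype_ne _ a, ha, zero_smul, zero_add] at hr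
      exact hr)
    by_cases hba : b = a
    · exact hb (hba ▸ ha)
    · exact hb (h1 ⟨b, hba⟩)
  have hz : ∀ a x, (r a • φ a) x = 0 ↔ φ a x = 0 := by
    intro a x
    simp [hr0 a]
  have hs : ∀ x, ∑ a, (r a • φ a) x = 0 := by
    intro x
    rw [← LinearMap.sum_apply, hr, LinearMap.zero_apply]
  have hi : ∀ x, (∀ a, (r a • φ a) x = 0) → x = 0 := by
    intro x hx
    have hsp := (hφ 0).span_eq_top_of_card_eq_finrank' (by
      simp [Subspace.dual_finrank_eq])
    rw [← Module.forall_dual_apply_eq_zero_iff ℂ x]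
    intro f
    have hf : f ∈ Submodule.span ℂ
        (Set.range (fun x : {x : Fin (k + 1) // x ≠ 0} => φ x)) := by
      rw [hsp]; trivial
    induction hf using Submodule.span_induction with
    | mem f h => obtain ⟨a, rfl⟩ := h; exact (hz _ _).1 (hx a)
    | zero => simp
    | add f g _ _ h1 h2 => simp [h1, h2]
    | smul c f _ h => simp [h]
  refine ⟨fun a => r a • φ a, hz, hs, hi, ?_⟩
  intro y hy
  let Ψ : (Fin k → ℂ) →ₗ[ℂ] (Fin (k + 1) → ℂ) := LinearMap.pi (fun a => r a • φ a)
  let S : (Fin (k + 1) → ℂ) →ₗ[ℂ] ℂ := ∑ a, LinearMap.proj a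
  have hS : ∀ z, S z = ∑ a, z a := by intro z; simp [S]
  have hinj : Function.Injective Ψ := by
    rw [injective_iff_map_eq_zero]
    intro x hx
    exact hi x (fun a => congrFun hx a)
  have hle : LinearMap.range Ψ ≤ LinearMap.ker S := by
    rintro _ ⟨x, rfl⟩
    rw [LinearMap.mem_ker, hS]
    exact hs x
  have hSsurj : LinearMap.range S = ⊤ := by
    rw [LinearMap.range_eq_top]
    intro c
    exact ⟨Pi.single 0 c, by rw [hS]; simp⟩
  have h1 := LinearMap.finrank_range_add_finrank_ker S
  rw [hSsurj] at h1
  have h2 := LinearMap.finrank_range_of_inj hinj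
  have heq := Submodule.eq_of_le_of_finrank_eq hle (by
    simp at h1 h2
    omega)
  have hmem : y ∈ LinearMap.range Ψ := by
    rw [heq, LinearMap.mem_ker, hS, hy]
  obtain ⟨x, hx⟩ := hmem
  exact ⟨x, fun a => congrFun hx a⟩

/-- **Abstract form of Proposition 5.3.** Given `k + 1` linear functionals on `ℂ^k` any
`k` of which are linearly independent, an injective cyclic list `σ : Fin d → Fin (k+1)`
(`2 ≤ d ≤ k + 1`), and the lines `L i = ⋂_{a ≠ σ(i-1), σ(i)} ker (φ a)`: each `L i` is
one-dimensional, and any choice of nonzero vectors `v i ∈ L i` satisfies a linear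
relation with all coefficients nonzero which is unique up to scale (the `v i` form a
circuit). -/
theorem lines_around_black_vertex_form_circuit
    (k d : ℕ) (hk : 1 ≤ k) (hd2 : 2 ≤ d) (hdk : d ≤ k + 1)
    (φ : Fin (k + 1) → ((Fin k → ℂ) →ₗ[ℂ] ℂ))
    (hφ : ∀ a : Fin (k + 1),
      LinearIndependent ℂ (fun x : {x : Fin (k + 1) // x ≠ a} => φ x))
    (σ : Fin d → Fin (k + 1)) (hσ : Function.Injective σ)
    (L : Fin d → Submodule ℂ (Fin k → ℂ))
    (hL : ∀ i : Fin d, L i =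
      ⨅ (a : Fin (k + 1)) (_ : a ≠ σ (i - ⟨1, by omega⟩) ∧ a ≠ σ i), LinearMap.ker (φ a)) :
    (∀ i, Module.finrank ℂ (L i) = 1) ∧
      ∀ v : Fin d → (Fin k → ℂ), (∀ i, v i ∈ L i) → (∀ i, v i ≠ 0) →
        ∃ c : Fin d → ℂ, (∀ i, c i ≠ 0) ∧ (∑ i, c i • v i = 0) ∧
          ∀ c' : Fin d → ℂ, (∑ i, c' i • v i = 0) → ∃ t : ℂ, c' = t • c := by
  obtain ⟨n, rfl⟩ : ∃ n, d = n + 2 := ⟨d - 2, by omega⟩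
  obtain ⟨ψ, hz, hs, hi, hsurj⟩ := exists_rescaling k φ hφ
  have hone : (⟨1, by omega⟩ : Fin (n + 2)) = 1 := rfl
  simp only [hone] at hL
  have hmem : ∀ i x, x ∈ L i ↔ ∀ a, a ≠ σ (i - 1) → a ≠ σ i → ψ a x = 0 := by
    intro i x
    rw [hL]
    simp only [Submodule.mem_iInf, LinearMap.mem_ker, hz]
    exact ⟨fun h a h1 h2 => h a ⟨h1, h2⟩, fun h a h12 => h a h12.1 h12.2⟩
  have hne : ∀ i : Fin (n + 2), σ (i - 1) ≠ σ i := by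
    intro i h
    have := hσ h
    simp at this
  -- the coordinates of a vector in L i
  have hcoord : ∀ i x, x ∈ L i → ∀ a, ψ a x =
      ψ (σ i) x * ((if a = σ i then 1 else 0) - (if a = σ (i - 1) then 1 else 0)) := by
    intro i x hx a
    rw [hmem] at hx
    by_cases h1 : a = σ i
    · subst h1
      simp [(hne i).symm]
    · by_cases h2 : a = σ (i - 1)
      · subst h2
        have h3 := hs x
        rw [Fintype.sum_eq_add (σ (i - 1)) (σ i) (hne i)
          (fun a ha => hx a ha.1 ha.2)] at h3
        simp only [h1, if_true, if_false]
        linear_combination h3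
      · simp [h1, h2, hx a h2 h1]
  refine ⟨?_, ?_⟩
  · intro i
    obtain ⟨w, hw⟩ := hsurj (fun a => (if a = σ i then 1 else 0) -
      (if a = σ (i - 1) then 1 else 0)) (by simp)
    have hwL : w ∈ L i := by
      rw [hmem]
      intro a h1 h2
      simp [hw, h1, h2]
    refine finrank_eq_one_iff'.2 ⟨⟨w, hwL⟩, ?_, ?_⟩
    · intro h
      have h0 : w = 0 := congrArg Subtype.val h
      have h1 := hw (σ i)
      simp [h0, (hne i).symm] at h1
    · rintro ⟨x, hx⟩
      refine ⟨ψ (σ i) x, Subtype.ext ?_⟩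
      change ψ (σ i) x • w = x
      rw [← sub_eq_zero]
      apply hi
      intro a
      rw [map_sub, map_smul, hcoord i x hx a, hw]
      simp
  · intro v hv hv0
    have ht : ∀ i, ψ (σ i) (v i) ≠ 0 := by
      intro i h
      apply hv0 i
      apply hi
      intro a
      rw [hcoord i _ (hv i) a, h, zero_mul]
    refine ⟨fun i => (ψ (σ i) (v i))⁻¹, fun i => inv_ne_zero (ht i), ?_, ?_⟩
    · apply hi
      intro a
      rw [map_sum]
      have : ∀ i, ψ a ((ψ (σ i) (v i))⁻¹ • v i) =
          (if a = σ i then 1 else 0) - (if a = σ (i - 1) then 1 else 0) := by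
        intro i
        rw [map_smul, hcoord i _ (hv i) a, smul_eq_mul, inv_mul_cancel_left₀ (ht i)]
      simp only [this]
      rw [Finset.sum_sub_distrib, sub_eq_zero]
      exact (Equiv.sum_comp (Equiv.subRight (1 : Fin (n + 2)))
        (fun i => if a = σ i then (1 : ℂ) else 0)).symm
    · intro c' hc'
      have hstep : ∀ j : Fin (n + 2), c' j * ψ (σ j) (v j) =
          c' (j + 1) * ψ (σ (j + 1)) (v (j + 1)) := by
        intro j
        have h1 := congrArg (ψ (σ j)) hc'
        rw [map_sum, map_zero] at h1
        have h2 : ∀ i, ψ (σ j) (c' i • v i) =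
            (if j = i then c' i * ψ (σ i) (v i) else 0) -
            (if j + 1 = i then c' i * ψ (σ i) (v i) else 0) := by
          intro i
          rw [map_smul, hcoord i _ (hv i) (σ j), smul_eq_mul]
          simp only [hσ.eq_iff, eq_sub_iff_add_eq]
          split_ifs <;> ring
        simp only [h2] at h1
        rw [Finset.sum_sub_distrib] at h1
        simpa [sub_eq_zero] using h1
      have hconst : ∀ j : Fin (n + 2), c' j * ψ (σ j) (v j) = c' 0 * ψ (σ 0) (v 0) := by
        intro j
        induction j using Fin.induction with
        | zero => rfl
        | succ i ih => rw [← ih, hstep i.castSucc, Fin.coeSucc_eq_succ]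
      refine ⟨c' 0 * ψ (σ 0) (v 0), ?_⟩
      funext j
      rw [Pi.smul_apply, smul_eq_mul, ← hconst j, mul_inv_cancel_right₀ (ht j)]
end

section
/- (Corollary 5.7.) Let (K, v) be a matrix-configuration with K supported on an edge set E. Let I ⊆ Fin N with |I| = k be such that the vectors v i for i ∈ I form a basis of ℂ^k. Suppose g : Fin M → Fin N is an injective map whose range is the complement of I, satisfying (b, g b) ∈ E for every b, and suppose g is the unique such map: every injective f : Fin M → Fin N with range equal to the complement of I and (b, f b) ∈ E for all b equals g. Then K b (g b) ≠ 0 for every b : Fin M. -/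
/-- **Corollary 5.7.** Let `(K, v)` be a matrix-configuration supported on `E`, let `I`
be a `k`-element set of white vertices whose vectors form a basis of `ℂ^k`, and let `g`
be the unique almost perfect matching of the black vertices with the white vertices
outside `I`. Then every coefficient `K b (g b)` along the matching is nonzero. -/
theorem coeff_nonzero_along_unique_matching
    (k M : ℕ) (K : Matrix (Fin M) (Fin (M + k)) ℂ) (v : Fin (M + k) → Fin k → ℂ)
    (hrank : K.rank = M)
    (hrel : ∀ b : Fin M, ∑ w, K b w • v w = 0)
    (hspan : Submodule.span ℂ (Set.range v) = ⊤)
    (E : Set (Fin M × Fin (M + k)))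
    (hsupp : ∀ b w, (b, w) ∉ E → K b w = 0)
    (I : Finset (Fin (M + k))) (hI : I.card = k)
    (hind : LinearIndependent ℂ (fun i : {i : Fin (M + k) // i ∈ I} => v i))
    (hbspan : Submodule.span ℂ (v '' ↑I) = ⊤)
    (g : Fin M → Fin (M + k))
    (hginj : Function.Injective g)
    (hgrange : Set.range g = {w : Fin (M + k) | w ∉ I})
    (hgE : ∀ b, (b, g b) ∈ E)
    (huniq : ∀ f : Fin M → Fin (M + k), Function.Injective f →
      Set.range f = {w : Fin (M + k) | w ∉ I} → (∀ b, (b, f b) ∈ E) → f = g) :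
    ∀ b : Fin M, K b (g b) ≠ 0 := by
  classical
  have hrow : Function.Injective K.vecMul := by
    rw [Matrix.vecMul_injective_iff, linearIndependent_iff_card_eq_finrank_span]
    rw [Matrix.rank_eq_finrank_span_row] at hrank
    simp only [Fintype.card_fin, Set.finrank]
    exact hrank.symm
  have hdet : (K.submatrix id g).det ≠ 0 := by
    intro h0
    obtain ⟨c, hc, hcA⟩ := Matrix.exists_vecMul_eq_zero_iff.mpr h0
    apply hc
    apply hrow
    beta_reduce
    rw [Matrix.zero_vecMul]
    have hout : ∀ w, w ∉ I → Matrix.vecMul c K w = 0 := by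
      intro w hw
      have hw' : w ∈ Set.range g := by rw [hgrange]; exact hw
      obtain ⟨b, rfl⟩ := hw'
      exact congrFun hcA b
    have hsum : ∑ w, Matrix.vecMul c K w • v w = 0 := by
      simp only [Matrix.vecMul, dotProduct, Finset.sum_smul]
      rw [Finset.sum_comm]
      apply Finset.sum_eq_zero
      intro b _
      simp only [mul_smul]
      rw [← Finset.smul_sum, hrel, smul_zero]
    have hsumI : ∑ i : {i : Fin (M + k) // i ∈ I}, Matrix.vecMul c K i • v i = 0 := by
      rw [← hsum, Finset.sum_coe_sort I (fun i => Matrix.vecMul c K i • v i)]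
      apply Finset.sum_subset (Finset.subset_univ I)
      intro w _ hw
      rw [hout w hw, zero_smul]
    have hin := Fintype.linearIndependent_iff.mp hind
      (fun i => Matrix.vecMul c K i) hsumI
    funext w
    by_cases hw : w ∈ I
    · exact hin ⟨w, hw⟩
    · exact hout w hw
  rw [Matrix.det_apply, Finset.sum_eq_single 1] at hdet
  · intro b hb
    apply hdet
    rw [Finset.prod_eq_zero (Finset.mem_univ b) (by simpa using hb), smul_zero]
  · intro σ _ hσ
    have : ∃ b, (σ b, g b) ∉ E := by
      by_contra! hall
      apply hσ
      have hfg := huniq (fun b => g (σ.symm b)) (hginj.comp σ.symm.injective)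
        (by rw [← hgrange]; exact σ.symm.surjective.range_comp g)
        (fun b => by simpa using hall (σ.symm b))
      ext b
      have h1 := hginj (congrFun hfg (σ b))
      simp only [Equiv.symm_apply_apply] at h1
      simp [← h1]
    obtain ⟨b, hb⟩ := this
    rw [Finset.prod_eq_zero (Finset.mem_univ b) (by simpa using hsupp _ _ hb), smul_zero]
  · simp
end

section
/- (Proposition 6.2.) Let B and W be finite types, let E' ⊆ B × W, and let ∂ ⊆ W be a set of boundary white vertices. Assume the bipartite simple graph F on B ⊕ W whose edges are the pairs {Sum.inl b, Sum.inr w} with (b, w) ∈ E' is a system: F is acyclic (a forest); every connected component of F contains exactly one vertex of the form Sum.inr w with w ∈ ∂; and every connected component of F either contains exactly one edge or has the property that every vertex Sum.inl b in it has degree 2 in F. Let K : B → W → ℂ satisfy K b w ≠ 0 for every (b, w) ∈ E'. Then there exists exactly one pair of functions λ : B → ℂˣ and μ : W → ℂˣ with μ w = 1 for every w ∈ ∂, such that (λ b) * (K b w) * (μ w) = 1 for every (b, w) ∈ E'. (Equivalently: every vector-relation configuration whose coefficients are nonzero on the edges of a system has a unique gauge representative, using gauge only at internal vertices, in which all coefficients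 on the system's edges equal 1.) -/
/-- Gauge value propagated along a walk. -/
def walkGauge {V : Type*} {F : SimpleGraph V} (c : V → V → ℂˣ) :
    {u v : V} → F.Walk u v → ℂˣ
  | _, _, .nil => 1
  | u, _, .cons (v := v) _ p => c u v / walkGauge c p

theorem walkGauge_adj {V : Type*} {F : SimpleGraph V} (hF : F.IsAcyclic)
    (c : V → V → ℂˣ) (hc : ∀ x y, c x y = c y x) {u v r s : V}
    (p : F.Walk u r) (q : F.Walk v s) (hp : p.IsPath) (hq : q.IsPath) (hrs : r = s)
    (h : F.Adj u v) : walkGauge c p * walkGauge c q = c u v := by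
  classical
  subst hrs
  have huniq : ∀ {a b : V} (p q : F.Walk a b), p.IsPath → q.IsPath → p = q := by
    intro a b p q hp hq
    exact congrArg Subtype.val (hF.path_unique ⟨p, hp⟩ ⟨q, hq⟩)
  by_cases hu : u ∈ q.support
  · have h1 : q.takeUntil u hu = .cons h.symm .nil :=
      huniq _ _ (hq.takeUntil hu) (by simp [h.ne'])
    have h2 : q.dropUntil u hu = p := huniq _ _ (hq.dropUntil hu) hp
    have h3 : q = .cons h.symm p := by
      rw [← q.take_spec hu, h1, h2]; rfl
    rw [h3, walkGauge, hc u v]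
    exact mul_div_cancel _ _
  · have h3 : p = .cons h q := huniq _ _ hp (hq.cons hu)
    rw [h3, walkGauge]
    exact div_mul_cancel _ _

theorem gauge_eq_of_walk {V : Type*} {F : SimpleGraph V} (g g' : V → ℂˣ)
    (hg : ∀ x y, F.Adj x y → g x * g y = g' x * g' y) {u v : V} (p : F.Walk u v)
    (h : g v = g' v) : g u = g' u := by
  induction p with
  | nil => exact h
  | cons hadj p ih =>
    have h1 := hg _ _ hadj
    rw [ih h] at h1
    exact mul_right_cancel h1

/-- **Proposition 6.2.** Let `F` be a system in a plabic graph (a forest whose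
components each contain exactly one boundary white vertex and are either single edges
or have all black vertices of degree `2`), with edge set `E'`. If `K` has nonzero
coefficients on all edges of the system, then there is a unique gauge `(λ, μ)` with
`μ w = 1` at boundary white vertices making all coefficients on the system's edges
equal to `1`. -/
theorem unique_gauge_on_system
    {B W : Type*} [Fintype B] [Fintype W]
    (E' : Set (B × W)) (bd : Set W)
    (F : SimpleGraph (B ⊕ W))
    (hF : ∀ x y : B ⊕ W, F.Adj x y ↔ ∃ p ∈ E',
      (x = Sum.inl p.1 ∧ y = Sum.inr p.2) ∨ (x = Sum.inr p.2 ∧ y = Sum.inl p.1))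
    (hforest : F.IsAcyclic)
    (hbdry : ∀ c : F.ConnectedComponent,
      ∃! w : W, w ∈ bd ∧ F.connectedComponentMk (Sum.inr w) = c)
    (hcomp : ∀ c : F.ConnectedComponent,
      (∃! e : Sym2 (B ⊕ W), e ∈ F.edgeSet ∧ ∀ x ∈ e, F.connectedComponentMk x = c) ∨
      (∀ b : B, F.connectedComponentMk (Sum.inl b) = c →
        (F.neighborSet (Sum.inl b)).ncard = 2))
    (K : B → W → ℂ)
    (hK : ∀ p ∈ E', K p.1 p.2 ≠ 0) :
    ∃! gauges : (B → ℂˣ) × (W → ℂˣ),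
      (∀ w ∈ bd, gauges.2 w = 1) ∧
      ∀ p ∈ E', (gauges.1 p.1 : ℂ) * K p.1 p.2 * (gauges.2 p.2 : ℂ) = 1 := by
  classical
  let k : B → W → ℂˣ := fun b w => if h : K b w = 0 then 1 else (Units.mk0 (K b w) h)⁻¹
  have hk : ∀ p ∈ E', ∀ a d : ℂˣ,
      (a : ℂ) * K p.1 p.2 * (d : ℂ) = 1 ↔ a * d = k p.1 p.2 := by
    intro p hp a d
    have h0 := hK p hp
    simp only [k, h0, dite_false, eq_inv_iff_mul_eq_one, Units.ext_iff, Units.val_mul,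
      Units.val_mk0, Units.val_one]
    rw [mul_right_comm]
  let c : B ⊕ W → B ⊕ W → ℂˣ
    | .inl b, .inr w => k b w
    | .inr w, .inl b => k b w
    | _, _ => 1
  have hc : ∀ x y, c x y = c y x := by rintro (x | x) (y | y) <;> rfl
  choose rt hrt hrt' using hbdry
  have hreach : ∀ v : B ⊕ W,
      F.Reachable v (Sum.inr (rt (F.connectedComponentMk v))) := fun v =>
    (SimpleGraph.ConnectedComponent.exact (hrt (F.connectedComponentMk v)).2).symm
  have hpath : ∀ v : B ⊕ W, ∃ p : F.Walk v (Sum.inr (rt (F.connectedComponentMk v))),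
      p.IsPath := fun v => (hreach v).exists_isPath
  choose P hP using hpath
  have hadj : ∀ p ∈ E', F.Adj (Sum.inl p.1) (Sum.inr p.2) := fun p hp =>
    (hF _ _).2 ⟨p, hp, Or.inl ⟨rfl, rfl⟩⟩
  refine ⟨(fun b => walkGauge c (P (.inl b)), fun w => walkGauge c (P (.inr w))),
    ⟨?_, ?_⟩, ?_⟩
  · intro w hw
    have hw' : w = rt (F.connectedComponentMk (.inr w)) := hrt' _ w ⟨hw, rfl⟩
    have key : ∀ (x : B ⊕ W) (p : F.Walk (.inr w) x), p.IsPath → .inr w = x →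
        walkGauge c p = 1 := by
      rintro x p hp rfl
      rw [SimpleGraph.Walk.isPath_iff_eq_nil.1 hp]
      rfl
    exact key _ _ (hP _) (congrArg _ hw')
  · intro p hp
    rw [hk p hp]
    exact walkGauge_adj hforest c hc _ _ (hP _) (hP _)
      (by rw [SimpleGraph.ConnectedComponent.sound (hadj p hp).reachable]) (hadj p hp)
  · rintro ⟨l, m⟩ ⟨h1, h2⟩
    have hall : ∀ v, Sum.elim l m v = walkGauge c (P v) := by
      intro v
      refine gauge_eq_of_walk (F := F) (Sum.elim l m) (fun v => walkGauge c (P v)) ?_ (P v) ?_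
      · intro x y hxy
        have h3 := walkGauge_adj hforest c hc _ _ (hP x) (hP y)
          (by rw [SimpleGraph.ConnectedComponent.sound hxy.reachable]) hxy
        refine Eq.trans ?_ h3.symm
        obtain ⟨p, hp, ⟨rfl, rfl⟩ | ⟨rfl, rfl⟩⟩ := (hF x y).1 hxy
        · exact (hk p hp _ _).1 (h2 p hp)
        · exact (mul_comm _ _).trans ((hk p hp _ _).1 (h2 p hp))
      · set w := rt (F.connectedComponentMk v) with hwdef
        have hw : w ∈ bd := (hrt _).1
        have hw' : w = rt (F.connectedComponentMk (.inr w)) := hrt' _ w ⟨hw, rfl⟩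
        have key : ∀ (x : B ⊕ W) (p : F.Walk (.inr w) x), p.IsPath → .inr w = x →
            walkGauge c p = 1 := by
          rintro x p hp rfl
          rw [SimpleGraph.Walk.isPath_iff_eq_nil.1 hp]
          rfl
        exact (h1 w hw).trans (key _ _ (hP _) (congrArg _ hw')).symm
    exact Prod.ext (funext fun b => hall (.inl b)) (funext fun w => hall (.inr w))
end

section
/- (Claims from the proof that the origin lies in the image of the chart φ_F, Section 6.) Let T be a finite tree (a connected acyclic simple graph on a finite vertex type V), and suppose V is partitioned into two sets B and W such that every edge of T joins a vertex of B to a vertex of W, and every vertex b ∈ B has degree exactly 2 in T. Then: (a) |W| = |B| + 1; and (b) for every w₀ ∈ W there exists exactly one matching of T whose set of covered vertices is V \ {w₀}, i.e., exactly one subgraph M of T in which every vertex of V other than w₀ is incident to exactly one edge of M and w₀ is incident to none. -/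
theorem parent_unique_aux {V : Type*} {G : SimpleGraph V} (hT : G.IsTree) (r : V) {u u' v : V}
    (h : G.Adj u v) (h' : G.Adj u' v) (hd : G.dist r v = G.dist r u + 1)
    (hd' : G.dist r v = G.dist r u' + 1) : u = u' := by
  obtain ⟨p, hp⟩ := hT.connected.exists_walk_length_eq_dist r u
  obtain ⟨q, hq⟩ := hT.connected.exists_walk_length_eq_dist r u'
  have h1 : (p.concat h).IsPath :=
    SimpleGraph.Walk.isPath_of_length_eq_dist _ (by rw [SimpleGraph.Walk.length_concat]; omega)
  have h2 : (q.concat h').IsPath :=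
    SimpleGraph.Walk.isPath_of_length_eq_dist _ (by rw [SimpleGraph.Walk.length_concat]; omega)
  have h3 : p.concat h = q.concat h' := (hT.existsUnique_path r v).unique h1 h2
  have := congrArg SimpleGraph.Walk.penultimate h3
  simpa using this

theorem parent_exists_aux {V : Type*} {G : SimpleGraph V} (hT : G.IsTree) (r : V) {v : V}
    (hv : v ≠ r) : ∃ u, G.Adj u v ∧ G.dist r v = G.dist r u + 1 := by
  obtain ⟨p, hp⟩ := hT.connected.exists_walk_length_eq_dist r v
  have hn : ¬ p.Nil := fun h => hv h.eq.symm
  have hadj := p.adj_penultimate hn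
  refine ⟨_, hadj, ?_⟩
  rcases hT.dist_eq_dist_add_one_of_adj r hadj with h | h
  · have h1 := SimpleGraph.dist_le p.dropLast
    have h2 : p.dropLast.length + 1 = p.length := by
      rw [← SimpleGraph.Walk.length_concat _ hadj, SimpleGraph.Walk.concat_dropLast]
    omega
  · exact h

theorem child_existsUnique_aux {V : Type*} {G : SimpleGraph V} (hT : G.IsTree) (r : V) {b : V}
    (hb : b ≠ r) (hdeg : (G.neighborSet b).ncard = 2) :
    ∃! c, G.Adj b c ∧ G.dist r c = G.dist r b + 1 := by
  obtain ⟨u, hu, hd⟩ := parent_exists_aux hT r hb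
  obtain ⟨x, y, hxy, hN⟩ := Set.ncard_eq_two.1 hdeg
  have hmem : ∀ z, G.Adj b z ↔ z = x ∨ z = y := fun z => by
    rw [← SimpleGraph.mem_neighborSet, hN]; simp
  have key : ∀ s t, s ≠ t → (∀ z, G.Adj b z ↔ z = s ∨ z = t) → u = s →
      ∃! c, G.Adj b c ∧ G.dist r c = G.dist r b + 1 := by
    intro s t hst hm hus
    have hbt : G.Adj b t := (hm t).2 (Or.inr rfl)
    refine ⟨t, ⟨hbt, ?_⟩, ?_⟩
    · rcases hT.dist_eq_dist_add_one_of_adj r hbt with h | h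
      · exact absurd (hus.symm.trans (parent_unique_aux hT r hu hbt.symm hd h)) hst
      · exact h
    · rintro z ⟨hz, hzd⟩
      rcases (hm z).1 hz with h | h
      · subst h; subst hus; omega
      · exact h
  rcases (hmem u).1 hu.symm with h | h
  · exact key x y hxy hmem h
  · exact key y x hxy.symm (fun z => (hmem z).trans or_comm) h

/-- **Claims from the proof that the origin lies in the image of the chart `φ_F`
(Section 6).** Let `T` be a finite tree whose vertices are partitioned into `B` and `W`
with every edge joining `B` to `W` and every vertex of `B` of degree exactly `2`. Then
`|W| = |B| + 1`, and for every `w₀ ∈ W` there is exactly one matching covering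
precisely the vertices other than `w₀`. -/
theorem tree_with_black_degree_two
    {V : Type*} [Fintype V] (G : SimpleGraph V) (hT : G.IsTree)
    (B W : Set V) (hcover : B ∪ W = Set.univ) (hdisj : Disjoint B W)
    (hbip : ∀ x y : V, G.Adj x y → (x ∈ B ∧ y ∈ W) ∨ (x ∈ W ∧ y ∈ B))
    (hdeg : ∀ b ∈ B, (G.neighborSet b).ncard = 2) :
    W.ncard = B.ncard + 1 ∧
      ∀ w₀ ∈ W, ∃! M : G.Subgraph, M.verts = Set.univ \ {w₀} ∧ M.IsMatching := by
  have hBW : ∀ x, x ∈ B → x ∉ W := fun x h h' => Set.disjoint_left.1 hdisj h h'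
  have hor : ∀ x, x ∈ B ∨ x ∈ W := fun x => by
    have : x ∈ B ∪ W := hcover ▸ Set.mem_univ x
    exact this
  have hbW : ∀ {b y}, b ∈ B → G.Adj b y → y ∈ W := fun {b y} hb h => by
    rcases hbip b y h with h | h
    · exact h.2
    · exact absurd h.1 (hBW b hb)
  have hwB : ∀ {w y}, w ∈ W → G.Adj w y → y ∈ B := fun {w y} hw h => by
    rcases hbip w y h with h | h
    · exact absurd hw (hBW w h.1)
    · exact h.2
  have hchild : ∀ w₀ ∈ W, ∀ b ∈ B, ∃! c, G.Adj b c ∧ G.dist w₀ c = G.dist w₀ b + 1 :=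
    fun w₀ hw₀ b hb =>
      child_existsUnique_aux hT w₀ (fun h => hBW b hb (h ▸ hw₀)) (hdeg b hb)
  constructor
  · have hWne : W.Nonempty := by
      obtain ⟨v⟩ := hT.connected.nonempty
      rcases hor v with h | h
      · obtain ⟨x, y, _, hN⟩ := Set.ncard_eq_two.1 (hdeg v h)
        have hx : G.Adj v x := by
          rw [← SimpleGraph.mem_neighborSet, hN]; simp
        exact ⟨x, hbW h hx⟩
      · exact ⟨v, h⟩
    obtain ⟨w₀, hw₀⟩ := hWne
    have hc := hchild w₀ hw₀
    choose! f hf _ using hc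
    have : B.ncard = (W \ {w₀}).ncard := by
      refine Set.ncard_congr (fun b _ => f b) ?_ ?_ ?_
      · intro b hb
        refine ⟨hbW hb (hf b hb).1, ?_⟩
        intro h
        have h2 := (hf b hb).2
        rw [Set.mem_singleton_iff.1 h, SimpleGraph.dist_self] at h2
        omega
      · intro a b ha hb hab
        have h1 := hf a ha
        have h2 := hf b hb
        rw [← hab] at h2
        exact parent_unique_aux hT w₀ h1.1 h2.1 h1.2 h2.2
      · rintro w ⟨hw, hne⟩
        obtain ⟨b, hb, hd⟩ := parent_exists_aux hT w₀ (v := w) hne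
        have hbB := hwB hw hb.symm
        exact ⟨b, hbB, (hchild w₀ hw₀ b hbB).unique (hf b hbB) ⟨hb, hd⟩⟩
    rw [this, Set.ncard_sdiff_singleton_add_one hw₀ (Set.toFinite W)]
  · intro w₀ hw₀
    have hc := hchild w₀ hw₀
    have hne0 : ∀ x y, G.dist w₀ y = G.dist w₀ x + 1 → y ≠ w₀ := by
      rintro x y h rfl
      rw [SimpleGraph.dist_self] at h
      omega
    refine ⟨⟨Set.univ \ {w₀}, fun x y => G.Adj x y ∧
      ((x ∈ B ∧ G.dist w₀ y = G.dist w₀ x + 1) ∨ (y ∈ B ∧ G.dist w₀ x = G.dist w₀ y + 1)),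
      fun h => h.1, ?_, ?_⟩, ⟨rfl, ?_⟩, ?_⟩
    · rintro x y ⟨_, h | h⟩
      · exact ⟨trivial, fun h' => hBW x h.1 (Set.mem_singleton_iff.1 h' ▸ hw₀)⟩
      · exact ⟨trivial, hne0 _ _ h.2⟩
    · exact ⟨fun x y h => ⟨h.1.symm, h.2.symm⟩⟩
    · rintro v ⟨_, hv⟩
      rcases hor v with hB | hW
      · obtain ⟨c, ⟨h1, h2⟩, h3⟩ := hc v hB
        refine ⟨c, ⟨h1, Or.inl ⟨hB, h2⟩⟩, ?_⟩
        rintro y ⟨hy, h | h⟩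
        · exact h3 y ⟨hy, h.2⟩
        · exact absurd (hbW hB hy) (hBW y h.1)
      · obtain ⟨b, hb, hd⟩ := parent_exists_aux hT w₀ (v := v) hv
        refine ⟨b, ⟨hb.symm, Or.inr ⟨hwB hW hb.symm, hd⟩⟩, ?_⟩
        rintro y ⟨hy, h | h⟩
        · exact absurd hW (hBW v h.1)
        · exact parent_unique_aux hT w₀ hy.symm hb h.2 hd
    · rintro M ⟨hV, hM⟩
      have hmemV : ∀ x, x ≠ w₀ → x ∈ M.verts := fun x hx => by
        rw [hV]; exact ⟨trivial, hx⟩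
      have hBne : ∀ b ∈ B, b ≠ w₀ := fun b hb h => hBW b hb (h ▸ hw₀)
      have key : ∀ n, ∀ b ∈ B, G.dist w₀ b = n → ∀ y, M.Adj b y →
          G.dist w₀ y = G.dist w₀ b + 1 := by
        intro n
        induction n using Nat.strong_induction_on with
        | _ n ih =>
          intro b hb hn y hy
          rcases hT.dist_eq_dist_add_one_of_adj w₀ hy.adj_sub with h | h
          · exfalso
            have hyV : y ∈ M.verts := hy.snd_mem
            rw [hV] at hyV
            obtain ⟨b', hb', hd'⟩ := parent_exists_aux hT w₀ (v := y) hyV.2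
            have hb'B : b' ∈ B := hwB (hbW hb hy.adj_sub) hb'.symm
            obtain ⟨z, hz, _⟩ := hM (hmemV b' (hBne b' hb'B))
            have hzd := ih _ (by omega) b' hb'B rfl z hz
            have hzy : z = y := (hc b' hb'B).unique ⟨hz.adj_sub, hzd⟩ ⟨hb', hd'⟩
            subst hzy
            have : b' = b := hM.eq_of_adj_right hz hy
            subst this
            omega
          · exact h
      have key2 : ∀ b ∈ B, ∀ y, M.Adj b y ↔ G.Adj b y ∧ G.dist w₀ y = G.dist w₀ b + 1 := by
        intro b hb y
        refine ⟨fun h => ⟨h.adj_sub, key _ b hb rfl y h⟩, fun h => ?_⟩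
        obtain ⟨z, hz, _⟩ := hM (hmemV b (hBne b hb))
        have hzy : z = y := (hc b hb).unique ⟨hz.adj_sub, key _ b hb rfl z hz⟩ h
        exact hzy ▸ hz
      refine SimpleGraph.Subgraph.ext hV ?_
      funext x y
      apply propext
      constructor
      · intro h
        refine ⟨h.adj_sub, ?_⟩
        rcases hbip x y h.adj_sub with h' | h'
        · exact Or.inl ⟨h'.1, ((key2 x h'.1 y).1 h).2⟩
        · exact Or.inr ⟨h'.2, ((key2 y h'.2 x).1 h.symm).2⟩
      · rintro ⟨h, h' | h'⟩
        · exact (key2 x h'.1 y).2 ⟨h, h'.2⟩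
        · exact ((key2 y h'.1 x).2 ⟨h.symm, h'.2⟩).symm
end
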